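/- arXiv:1501.07323 — 2 statements merged into one kernel-verified Lean document; each statement's English description precedes it below -/
import Mathlib

section
/- Let 1 ≤ k ≤ n, m ≥ k, and η ∈ [0,1]. Suppose the degree distribution is the binomial distribution Ω_d = C(n,d)/(2^n−1) for 1 ≤ d ≤ n, so that each LT row is uniformly distributed over the 2^n−1 nonzero vectors of GF(2)^n. Then, with the random pre-code matrix G_pre (systematic (n,k,η) LDPC generator) and the random m×n LT matrix G_LT with i.i.d. LT rows independent of G_pre, the probability that the m×k product matrix G_LT·G_pre over GF(2) has rank k is at least 1 − (2^k − 1) · ((2^{n−1} − 1)/(2^n − 1))^m. -/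
open Finset

noncomputable section

/-- Probability of a particular realization of a matrix with i.i.d. Bernoulli(η) entries
(each entry equals `1` with probability `η`). -/
def preProb (η : ℝ) {l i : ℕ} (P : Matrix (Fin l) (Fin i) (ZMod 2)) : ℝ :=
  ∏ a : Fin l, ∏ b : Fin i, if P a b = 1 then η else 1 - η

/-- Probability of a particular LT row under degree distribution Ω: a degree
`d ∈ {1,...,n}` is drawn with probability `Ω d`, then the row is uniform among the
`C(n,d)` vectors of Hamming weight `d`. -/
def ltRowProb (n : ℕ) (Ω : ℕ → ℝ) (g : Fin n → ZMod 2) : ℝ :=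
  if hammingNorm g = 0 then 0 else Ω (hammingNorm g) / (n.choose (hammingNorm g) : ℝ)

/-- Probability of a particular LT matrix (i.i.d. LT rows). -/
def ltProb (n : ℕ) (Ω : ℕ → ℝ) {m : ℕ} (G : Matrix (Fin m) (Fin n) (ZMod 2)) : ℝ :=
  ∏ i : Fin m, ltRowProb n Ω (G i)

/-- The systematic pre-code generator matrix `[I_k ; P]` (identity on top of `P`). -/
def Gpre {n k : ℕ} (hkn : k ≤ n) (P : Matrix (Fin (n - k)) (Fin k) (ZMod 2)) :
    Matrix (Fin n) (Fin k) (ZMod 2) :=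
  Matrix.of fun a b =>
    if ha : (a : ℕ) < k then (if (a : ℕ) = (b : ℕ) then 1 else 0)
    else P ⟨(a : ℕ) - k, by have := a.isLt; omega⟩ b

/-- `J(r) = ∑_{d=1}^{n} Ω_d (∑_{s even, 0 ≤ s ≤ d} C(r,s) C(n−r,d−s)) / C(n,d)`. -/
def J (n : ℕ) (Ω : ℕ → ℝ) (r : ℕ) : ℝ :=
  ∑ d ∈ Finset.Icc 1 n, Ω d *
    (∑ s ∈ (Finset.range (d + 1)).filter (fun s => Even s),
        (r.choose s : ℝ) * ((n - r).choose (d - s) : ℝ)) / (n.choose d : ℝ)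

/-- `D(i,r) = C(n−k, r−i) ((1+(1−2η)^i)/2)^{n−k−(r−i)} ((1−(1−2η)^i)/2)^{r−i}`. -/
def D (n k : ℕ) (η : ℝ) (i r : ℕ) : ℝ :=
  ((n - k).choose (r - i) : ℝ) * ((1 + (1 - 2 * η) ^ i) / 2) ^ (n - k - (r - i)) *
    ((1 - (1 - 2 * η) ^ i) / 2) ^ (r - i)

/-!
If `G * B` does not have full column rank, then `G * B` kills some nonzero `x`, that is, every row
of `G` is orthogonal to `B * x`. As `B` has full column rank, `B * x` is nonzero, so a uniform
nonzero row is orthogonal to it with probability `(q ^ (n - 1) - 1) / (q ^ n - 1)`: the orthogonal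
complement is a hyperplane, from which the zero vector is removed. Independence of the `m` rows
raises this to the power `m`, and a union bound over the `q ^ k - 1` nonzero `x` bounds the failure
probability for each fixed `B`, hence also for a random one. For the pre-code, full column rank
comes from its identity block.
-/

section Counting

variable {F ι : Type*} [Field F] [Fintype F] [DecidableEq F] [Fintype ι] [DecidableEq ι]

lemma card_filter_dotProduct_eq_zero {y : ι → F} (hy : y ≠ 0) :
    #{g : ι → F | g ⬝ᵥ y = 0} = Fintype.card F ^ (Fintype.card ι - 1) := by
  have hφ : dotProductEquiv F ι y ≠ 0 := (dotProductEquiv F ι).map_ne_zero_iff.2 hy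
  have hker : Module.finrank F (dotProductEquiv F ι y).ker = Fintype.card ι - 1 := by
    have := Module.Dual.finrank_ker_add_one_of_ne_zero hφ
    rw [Module.finrank_fintype_fun_eq_card] at this
    omega
  calc #{g : ι → F | g ⬝ᵥ y = 0}
      = Nat.card (dotProductEquiv F ι y).ker := by
        rw [← Fintype.card_subtype, ← Nat.card_eq_fintype_card]
        exact Nat.card_congr (Equiv.subtypeEquivRight fun g ↦ by simp [dotProduct_comm])
    _ = Fintype.card F ^ (Fintype.card ι - 1) := by
        rw [Module.natCard_eq_pow_finrank (K := F), hker, Nat.card_eq_fintype_card]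

end Counting

section UniformNonzero

variable {V : Type*} [Fintype V] [Zero V] [DecidableEq V]

/-- The uniform probability law on the nonzero elements of a finite type `V`; it vanishes
identically when `V` has no nonzero element. -/
def uniformNonzero (v : V) : ℝ :=
  if v = 0 then 0 else 1 / ((Fintype.card V : ℝ) - 1)

lemma uniformNonzero_nonneg (v : V) : 0 ≤ uniformNonzero v := by
  have hcard : (1 : ℝ) ≤ Fintype.card V := by exact_mod_cast Fintype.card_pos_iff.2 ⟨(0 : V)⟩
  rw [uniformNonzero]
  split_ifs
  · rfl
  · exact one_div_nonneg.2 (sub_nonneg.2 hcard)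

lemma sum_uniformNonzero_of_zero_mem {s : Finset V} (hs : 0 ∈ s) :
    ∑ v ∈ s, uniformNonzero v = ((#s : ℝ) - 1) / ((Fintype.card V : ℝ) - 1) := by
  have hne : ∀ v ∈ s.erase 0, uniformNonzero v = 1 / ((Fintype.card V : ℝ) - 1) :=
    fun v hv ↦ if_neg (ne_of_mem_erase hv)
  rw [← add_sum_erase s _ hs, sum_congr rfl hne, sum_const, nsmul_eq_mul,
    cast_card_erase_of_mem hs, uniformNonzero, if_pos rfl, zero_add, mul_one_div]

lemma sum_uniformNonzero [Nontrivial V] : ∑ v : V, uniformNonzero v = 1 := by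
  have hcard : (1 : ℝ) < Fintype.card V := by exact_mod_cast Fintype.one_lt_card
  rw [sum_uniformNonzero_of_zero_mem (mem_univ 0), card_univ, div_self (sub_pos.2 hcard).ne']

lemma sum_uniformNonzero_dotProduct_eq_zero {F ι : Type*} [Field F] [Fintype F] [DecidableEq F]
    [Fintype ι] [DecidableEq ι] {y : ι → F} (hy : y ≠ 0) :
    ∑ g : ι → F with g ⬝ᵥ y = 0, uniformNonzero g =
      ((Fintype.card F : ℝ) ^ (Fintype.card ι - 1) - 1) /
        ((Fintype.card F : ℝ) ^ Fintype.card ι - 1) := by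
  rw [sum_uniformNonzero_of_zero_mem (by simp), card_filter_dotProduct_eq_zero hy,
    Fintype.card_fun, Nat.cast_pow, Nat.cast_pow]

end UniformNonzero

lemma sum_filter_exists_le {α β M : Type*} [Fintype α] [AddCommMonoid M] [PartialOrder M]
    [IsOrderedAddMonoid M] {w : α → M} (hw : ∀ a, 0 ≤ w a) (s : Finset β)
    (p : α → β → Prop) [∀ a, DecidablePred (p a)] :
    ∑ a with ∃ b ∈ s, p a b, w a ≤ ∑ b ∈ s, ∑ a with p a b, w a := by
  simp_rw [sum_filter]
  rw [sum_comm]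
  refine sum_le_sum fun a _ ↦ ?_
  have hterm : ∀ b ∈ s, 0 ≤ if p a b then w a else 0 := fun b _ ↦ by
    split_ifs <;> simp [hw]
  split_ifs with h
  · obtain ⟨b, hb, hab⟩ := h
    exact (if_pos hab).ge.trans (single_le_sum hterm hb)
  · exact sum_nonneg hterm

section RandomMatrix

open scoped Matrix

variable {F κ μ ν : Type*} [Fintype κ]

lemma exists_mulVec_eq_zero_of_rank_ne_card [CommRing F] [Nontrivial F] {A : Matrix μ κ F}
    (hA : A.rank ≠ Fintype.card κ) : ∃ x ≠ 0, A *ᵥ x = 0 := by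
  by_contra! hker
  have hinj : Function.Injective A.mulVecLin :=
    (injective_iff_map_eq_zero _).2 fun x ↦ not_imp_not.1 (hker x)
  exact hA ((LinearMap.finrank_range_of_inj hinj).trans (Module.finrank_fintype_fun_eq_card F))

variable [Fintype F] [Fintype μ] [DecidableEq μ] [Fintype ν] [DecidableEq ν]

lemma sum_prod_row {R : Type*} [CommSemiring R] (p : (ν → F) → R) :
    ∑ G : Matrix μ ν F, ∏ i, p (G i) = (∑ g, p g) ^ Fintype.card μ :=
  calc ∑ G : Matrix μ ν F, ∏ i, p (G i)
      = ∑ G : μ → ν → F, ∏ i, p (G i) := (Matrix.of.sum_comp _).symm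
    _ = (∑ g, p g) ^ Fintype.card μ := by
        rw [← Fintype.prod_sum fun _ ↦ p, prod_const, card_univ]

variable [DecidableEq F]

lemma sum_prod_row_mulVec_eq_zero [NonUnitalNonAssocSemiring F] {R : Type*} [CommSemiring R]
    (p : (ν → F) → R) (y : ν → F) :
    ∑ G : Matrix μ ν F with G *ᵥ y = 0, ∏ i, p (G i) =
      (∑ g with g ⬝ᵥ y = 0, p g) ^ Fintype.card μ := by
  have hrows : ∀ G : Matrix μ ν F, G *ᵥ y = 0 ↔ ∀ i, G i ⬝ᵥ y = 0 := fun _ ↦ funext_iff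
  simp_rw [sum_filter, ← sum_prod_row, Fintype.prod_ite_zero, hrows]

variable [CommRing F] [Nontrivial F]

lemma sum_rank_mul_ne_card_le [DecidableEq κ] {M : Type*} [AddCommMonoid M] [PartialOrder M]
    [IsOrderedAddMonoid M] (B : Matrix ν κ F) {w : Matrix μ ν F → M} (hw : ∀ G, 0 ≤ w G) :
    ∑ G with (G * B).rank ≠ Fintype.card κ, w G ≤
      ∑ x ∈ univ.erase (0 : κ → F), ∑ G with G *ᵥ (B *ᵥ x) = 0, w G := by
  refine le_trans (sum_le_sum_of_subset_of_nonneg ?_ fun G _ _ ↦ hw G)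
    (sum_filter_exists_le hw _ fun G x ↦ G *ᵥ (B *ᵥ x) = 0)
  refine monotone_filter_right _ fun G _ hG ↦ ?_
  obtain ⟨x, hx, hGx⟩ := exists_mulVec_eq_zero_of_rank_ne_card hG
  exact ⟨x, mem_erase.2 ⟨hx, mem_univ x⟩, by rwa [Matrix.mulVec_mulVec]⟩

theorem one_sub_mul_pow_le_sum_rank_mul_eq_card {p : (ν → F) → ℝ} (hp : ∀ g, 0 ≤ p g)
    (hp_sum : ∑ g, p g = 1) {β : ℝ} (hβ : ∀ y ≠ 0, ∑ g with g ⬝ᵥ y = 0, p g ≤ β)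
    {B : Matrix ν κ F} (hB : Function.Injective B.mulVec) :
    1 - ((Fintype.card F : ℝ) ^ Fintype.card κ - 1) * β ^ Fintype.card μ ≤
      ∑ G : Matrix μ ν F with (G * B).rank = Fintype.card κ, ∏ i, p (G i) := by
  classical
  have htotal : ∑ G : Matrix μ ν F, ∏ i, p (G i) = 1 := by
    rw [sum_prod_row, hp_sum, one_pow]
  have hfail : ∑ G : Matrix μ ν F with (G * B).rank ≠ Fintype.card κ, ∏ i, p (G i) ≤
      ((Fintype.card F : ℝ) ^ Fintype.card κ - 1) * β ^ Fintype.card μ :=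
    calc _ ≤ ∑ x ∈ univ.erase (0 : κ → F),
            ∑ G : Matrix μ ν F with G *ᵥ (B *ᵥ x) = 0, ∏ i, p (G i) :=
          sum_rank_mul_ne_card_le B fun G ↦ prod_nonneg fun i _ ↦ hp (G i)
      _ ≤ #(univ.erase (0 : κ → F)) • β ^ Fintype.card μ := by
          refine sum_le_card_nsmul _ _ _ fun x hx ↦ ?_
          have hBx : B *ᵥ x ≠ 0 := by
            simpa only [Matrix.mulVec_zero] using hB.ne (ne_of_mem_erase hx)
          rw [sum_prod_row_mulVec_eq_zero]
          exact pow_le_pow_left₀ (sum_nonneg fun g _ ↦ hp g) (hβ _ hBx) _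
      _ = _ := by
          rw [nsmul_eq_mul, cast_card_erase_of_mem (mem_univ 0), card_univ,
            Fintype.card_fun, Nat.cast_pow]
  rw [← sum_filter_add_sum_filter_not univ fun G : Matrix μ ν F ↦
    (G * B).rank = Fintype.card κ] at htotal
  linarith

end RandomMatrix

theorem raptor_binomial_lower_bound_general {F κ μ ν : Type*} [Field F] [Fintype F] [DecidableEq F]
    [Fintype κ] [Fintype μ] [DecidableEq μ] [Fintype ν] [DecidableEq ν] [Nonempty ν] {ι : Type*}
    [Fintype ι] {w : ι → ℝ} (hw : ∀ i, 0 ≤ w i) (hw_sum : ∑ i, w i = 1) {B : ι → Matrix ν κ F}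
    (hB : ∀ i, Function.Injective (B i).mulVec) :
    1 - ((Fintype.card F : ℝ) ^ Fintype.card κ - 1) *
        (((Fintype.card F : ℝ) ^ (Fintype.card ν - 1) - 1) /
          ((Fintype.card F : ℝ) ^ Fintype.card ν - 1)) ^ Fintype.card μ ≤
      ∑ i, ∑ G : Matrix μ ν F,
        if (G * B i).rank = Fintype.card κ then w i * ∏ r, uniformNonzero (G r) else 0 := by
  have hfixed := fun i ↦ one_sub_mul_pow_le_sum_rank_mul_eq_card (μ := μ) uniformNonzero_nonneg
    sum_uniformNonzero (fun _ hy ↦ (sum_uniformNonzero_dotProduct_eq_zero hy).le) (hB i)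
  simp_rw [← sum_filter, ← mul_sum]
  calc _ = ∑ i, w i * _ := by rw [← sum_mul, hw_sum, one_mul]
    _ ≤ _ := sum_le_sum fun i _ ↦ mul_le_mul_of_nonneg_left (hfixed i) (hw i)

section Raptor

lemma preProb_nonneg {η : ℝ} (hη0 : 0 ≤ η) (hη1 : η ≤ 1) {l i : ℕ}
    (P : Matrix (Fin l) (Fin i) (ZMod 2)) : 0 ≤ preProb η P := by
  refine prod_nonneg fun a _ ↦ prod_nonneg fun b _ ↦ ?_
  split_ifs
  · exact hη0
  · exact sub_nonneg.2 hη1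

lemma sum_preProb (η : ℝ) (l i : ℕ) :
    ∑ P : Matrix (Fin l) (Fin i) (ZMod 2), preProb η P = 1 := by
  have hentry : ∑ z : ZMod 2, (if z = 1 then η else 1 - η) = 1 := by
    simp [show (univ : Finset (ZMod 2)) = {0, 1} from rfl]
  have hrow : ∑ r : Fin i → ZMod 2, ∏ b, (if r b = 1 then η else 1 - η) = 1 := by
    rw [← Fintype.sum_pow fun z : ZMod 2 ↦ if z = 1 then η else 1 - η, hentry, one_pow]
  simp_rw [preProb]
  rw [sum_prod_row fun r : Fin i → ZMod 2 ↦ ∏ b, if r b = 1 then η else 1 - η, hrow, one_pow]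

lemma Gpre_mulVec_injective {n k : ℕ} (hkn : k ≤ n) (P : Matrix (Fin (n - k)) (Fin k) (ZMod 2)) :
    Function.Injective (Gpre hkn P).mulVec := by
  have htop : ∀ x b, (Gpre hkn P).mulVec x (Fin.castLE hkn b) = x b := fun x b ↦ by
    simp [Matrix.mulVec, dotProduct, Gpre, Fin.val_inj]
  intro x y hxy
  ext b
  rw [← htop x, hxy, htop]

lemma ltRowProb_binomial (n : ℕ) (g : Fin n → ZMod 2) :
    ltRowProb n (fun d => (n.choose d : ℝ) / ((2 : ℝ) ^ n - 1)) g = uniformNonzero g := by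
  have hchoose : (n.choose (hammingNorm g) : ℝ) ≠ 0 := by
    have hle : hammingNorm g ≤ n := by simpa using hammingNorm_le_card_fintype (x := g)
    exact_mod_cast (Nat.choose_pos hle).ne'
  simp only [ltRowProb, uniformNonzero, hammingNorm_eq_zero, div_right_comm _ _ (n.choose _ : ℝ),
    div_self hchoose, Fintype.card_fun, ZMod.card, Fintype.card_fin, Nat.cast_pow, Nat.cast_ofNat]

lemma ltProb_binomial {n m : ℕ} (G : Matrix (Fin m) (Fin n) (ZMod 2)) :
    ltProb n (fun d => (n.choose d : ℝ) / ((2 : ℝ) ^ n - 1)) G = ∏ i, uniformNonzero (G i) :=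
  prod_congr rfl fun i _ ↦ ltRowProb_binomial n (G i)

end Raptor

/-- Corollary 1: with the binomial degree distribution
`Ω_d = C(n,d)/(2^n − 1)` (so each LT row is uniform over the nonzero vectors of GF(2)^n),
the decoding success probability is at least
`1 − (2^k − 1) ((2^{n−1} − 1)/(2^n − 1))^m`. -/
theorem raptor_binomial_lower_bound
    (n k m : ℕ) (η : ℝ)
    (hk : 1 ≤ k) (hkn : k ≤ n) (hm : k ≤ m)
    (hη0 : 0 ≤ η) (hη1 : η ≤ 1) :
    1 - ((2 : ℝ) ^ k - 1) * (((2 : ℝ) ^ (n - 1) - 1) / ((2 : ℝ) ^ n - 1)) ^ m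
      ≤ ∑ P : Matrix (Fin (n - k)) (Fin k) (ZMod 2),
          ∑ G : Matrix (Fin m) (Fin n) (ZMod 2),
            if (G * Gpre hkn P).rank = k then
              preProb η P * ltProb n (fun d => (n.choose d : ℝ) / ((2 : ℝ) ^ n - 1)) G
            else 0 := by
  have : Nonempty (Fin n) := ⟨⟨0, hk.trans hkn⟩⟩
  simpa only [ltProb_binomial, ZMod.card, Fintype.card_fin, Nat.cast_ofNat] using
    raptor_binomial_lower_bound_general (μ := Fin m) (preProb_nonneg hη0 hη1)
      (sum_preProb η (n - k) k) (Gpre_mulVec_injective hkn)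
end
end

section
/- Let l ≥ 0 and i ≥ 1 be integers and η ∈ [0,1]. Let P be a random l×i matrix over GF(2) whose entries are i.i.d. Bernoulli(η) bits, and let 1_i denote the all-ones column vector of length i. Then for every 0 ≤ j ≤ l, the probability that the Hamming weight of the product P·1_i (computed over GF(2)) equals j is C(l,j) · ((1−(1−2η)^i)/2)^j · ((1+(1−2η)^i)/2)^{l−j}. -/
open Finset

noncomputable section

/-!
The rows of the matrix are independent, so the weight is binomial and only the law of a row sum
matters. The sign character `ψ x = (-1) ^ x` of `ZMod 2` turns that sum into a product of
independent factors, of expectation `1 - 2 * η` each; since the expectation of `ψ` is also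
`P(even) - P(odd)`, and `P(even) + P(odd) = 1`, both probabilities follow.
-/

section Binomial

variable {ι α R : Type*} [Fintype ι] [DecidableEq ι] [Fintype α] [CommSemiring R]

lemma sum_prod_with_filter_eq (w : α → R) (p : α → Prop) [DecidablePred p] (S : Finset ι) :
    ∑ x : ι → α with ({a | p (x a)} : Finset ι) = S, ∏ a, w (x a)
      = (∑ y with p y, w y) ^ #S * (∑ y with ¬ p y, w y) ^ #Sᶜ := by
  let t (a : ι) : Finset α := if a ∈ S then univ.filter p else univ.filter (¬ p ·)
  have fiber_eq : ({x | ({a | p (x a)} : Finset ι) = S} : Finset (ι → α)) = Fintype.piFinset t := by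
    ext x
    simp only [mem_filter_univ, Finset.ext_iff, Fintype.mem_piFinset]
    refine forall_congr' fun a => ?_
    by_cases ha : a ∈ S <;> simp [t, ha]
  calc ∑ x : ι → α with ({a | p (x a)} : Finset ι) = S, ∏ a, w (x a)
      = ∏ a, ∑ y ∈ t a, w y := by rw [fiber_eq, prod_univ_sum]
    _ = (∏ a ∈ S, ∑ y ∈ t a, w y) * ∏ a ∈ Sᶜ, ∑ y ∈ t a, w y := (prod_mul_prod_compl S _).symm
    _ = (∑ y with p y, w y) ^ #S * (∑ y with ¬ p y, w y) ^ #Sᶜ := by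
      congr 1
      · exact prod_eq_pow_card fun a ha => by simp only [t, if_pos ha]
      · exact prod_eq_pow_card fun a ha => by simp only [t, if_neg (mem_compl.1 ha)]

lemma sum_prod_with_card_filter_eq (w : α → R) (p : α → Prop) [DecidablePred p] (j : ℕ) :
    ∑ x : ι → α with #{a | p (x a)} = j, ∏ a, w (x a)
      = (Fintype.card ι).choose j * (∑ y with p y, w y) ^ j *
          (∑ y with ¬ p y, w y) ^ (Fintype.card ι - j) := by
  have maps_to : ∀ x ∈ ({x | #{a | p (x a)} = j} : Finset (ι → α)),
      ({a | p (x a)} : Finset ι) ∈ powersetCard j univ := fun x hx =>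
    mem_powersetCard_univ.2 ((mem_filter_univ x).1 hx)
  have sum_fiber : ∀ S ∈ powersetCard j (univ : Finset ι),
      ∑ x ∈ ({x | #{a | p (x a)} = j} : Finset (ι → α)) with ({a | p (x a)} : Finset ι) = S,
          ∏ a, w (x a)
        = (∑ y with p y, w y) ^ j * (∑ y with ¬ p y, w y) ^ (Fintype.card ι - j) := by
    intro S hS
    obtain rfl : #S = j := mem_powersetCard_univ.1 hS
    rw [filter_filter, ← card_compl, ← sum_prod_with_filter_eq w p S]
    congr 1
    ext x
    simp only [mem_filter_univ, and_iff_right_iff_imp]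
    exact congrArg card
  rw [← sum_fiberwise_of_maps_to maps_to, sum_congr rfl sum_fiber, sum_const, card_powersetCard,
    card_univ, nsmul_eq_mul, mul_assoc]

end Binomial

section Parity

variable {κ R K : Type*} [CommRing R] [Field K]

lemma addChar_sum_eq_prod {A M : Type*} [AddCommMonoid A] [CommMonoid M] (ψ : AddChar A M)
    (s : Finset κ) (f : κ → A) : ψ (∑ b ∈ s, f b) = ∏ b ∈ s, ψ (f b) :=
  map_prod ψ.toMonoidHom (fun b => Multiplicative.ofAdd (f b)) s

lemma sum_zmod_two {M : Type*} [AddCommMonoid M] (f : ZMod 2 → M) : ∑ x, f x = f 0 + f 1 :=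
  Fin.sum_univ_two f

/-- The Bernoulli(`η`) law on bits, as a weight function. The parameter `η` may lie in any
commutative ring, so the weights need not be nonnegative. -/
def bernoulliWeight (η : R) (x : ZMod 2) : R := if x = 1 then η else 1 - η

/-- The product of the Bernoulli(`η b`) laws, i.e. the law of a vector of independent bits, which
need not be identically distributed. -/
def bernoulliVectorWeight [Fintype κ] (η : κ → R) (r : κ → ZMod 2) : R :=
  ∏ b, bernoulliWeight (η b) (r b)

/-- The sign character `x ↦ (-1) ^ x` of `ZMod 2`, used to detect the parity of a sum of bits. -/
def signChar : AddChar (ZMod 2) R := AddChar.zmodChar 2 neg_one_sq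

lemma signChar_one : signChar (1 : ZMod 2) = (-1 : R) := pow_one _

lemma sum_bernoulliWeight (η : R) : ∑ x, bernoulliWeight η x = 1 := by
  simp [sum_zmod_two, bernoulliWeight]

lemma sum_signChar_mul_bernoulliWeight (η : R) :
    ∑ x, signChar x * bernoulliWeight η x = 1 - 2 * η := by
  rw [sum_zmod_two, AddChar.map_zero_eq_one, signChar_one, bernoulliWeight, bernoulliWeight,
    if_neg zero_ne_one, if_pos rfl]
  ring

lemma sum_signChar_mul_eq_sub {α : Type*} [Fintype α] (f : α → ZMod 2) (w : α → R) :
    ∑ x, signChar (f x) * w x = ∑ x with f x = 0, w x - ∑ x with f x ≠ 0, w x := by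
  rw [← sum_filter_add_sum_filter_not univ (f · = 0), sub_eq_add_neg, ← sum_neg_distrib]
  congr 1 <;> refine sum_congr rfl fun x hx => ?_
  · rw [(mem_filter_univ x).1 hx, AddChar.map_zero_eq_one, one_mul]
  · have odd : f x = 1 := Fin.eq_one_of_ne_zero (f x) ((mem_filter_univ x).1 hx)
    rw [odd, signChar_one, neg_one_mul]

variable [Fintype κ] [DecidableEq κ]

lemma sum_bernoulliVectorWeight (η : κ → R) : ∑ r, bernoulliVectorWeight η r = 1 :=
  calc ∑ r, bernoulliVectorWeight η r
      = ∏ b, ∑ x, bernoulliWeight (η b) x := (Fintype.prod_sum fun b => bernoulliWeight (η b)).symm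
    _ = 1 := prod_eq_one fun b _ => sum_bernoulliWeight (η b)

lemma sum_signChar_sum_mul_bernoulliVectorWeight (η : κ → R) :
    ∑ r, signChar (∑ b, r b) * bernoulliVectorWeight η r = ∏ b, (1 - 2 * η b) :=
  calc ∑ r, signChar (∑ b, r b) * bernoulliVectorWeight η r
      = ∑ r : κ → ZMod 2, ∏ b, signChar (r b) * bernoulliWeight (η b) (r b) := by
        simp only [bernoulliVectorWeight, addChar_sum_eq_prod, prod_mul_distrib]
    _ = ∏ b, ∑ x, signChar x * bernoulliWeight (η b) x :=
        (Fintype.prod_sum fun b x => signChar x * bernoulliWeight (η b) x).symm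
    _ = ∏ b, (1 - 2 * η b) := prod_congr rfl fun b _ => sum_signChar_mul_bernoulliWeight (η b)

lemma sum_even_add_sum_odd_bernoulliVectorWeight (η : κ → R) :
    ∑ r with ∑ b, r b = 0, bernoulliVectorWeight η r
      + ∑ r with ∑ b, r b ≠ 0, bernoulliVectorWeight η r = 1 := by
  rw [sum_filter_add_sum_filter_not, sum_bernoulliVectorWeight]

lemma sum_even_sub_sum_odd_bernoulliVectorWeight (η : κ → R) :
    ∑ r with ∑ b, r b = 0, bernoulliVectorWeight η r
      - ∑ r with ∑ b, r b ≠ 0, bernoulliVectorWeight η r = ∏ b, (1 - 2 * η b) := by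
  rw [← sum_signChar_mul_eq_sub, sum_signChar_sum_mul_bernoulliVectorWeight]

lemma sum_even_bernoulliVectorWeight [NeZero (2 : K)] (η : κ → K) :
    ∑ r with ∑ b, r b = 0, bernoulliVectorWeight η r = (1 + ∏ b, (1 - 2 * η b)) / 2 := by
  rw [eq_div_iff two_ne_zero]
  linear_combination sum_even_add_sum_odd_bernoulliVectorWeight η +
    sum_even_sub_sum_odd_bernoulliVectorWeight η

lemma sum_odd_bernoulliVectorWeight [NeZero (2 : K)] (η : κ → K) :
    ∑ r with ∑ b, r b ≠ 0, bernoulliVectorWeight η r = (1 - ∏ b, (1 - 2 * η b)) / 2 := by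
  rw [eq_div_iff two_ne_zero]
  linear_combination sum_even_add_sum_odd_bernoulliVectorWeight η -
    sum_even_sub_sum_odd_bernoulliVectorWeight η

end Parity

lemma hammingNorm_mulVec_one {ι κ R : Type*} [Fintype ι] [Fintype κ] [NonAssocSemiring R]
    [DecidableEq R] (P : Matrix ι κ R) :
    hammingNorm (P.mulVec fun _ => 1) = #{a | ∑ b, P a b ≠ 0} := by
  simp only [hammingNorm, Matrix.mulVec, dotProduct, mul_one]

theorem weight_of_bernoulli_matrix_mul_ones_general {ι κ K : Type*} [Fintype ι] [DecidableEq ι]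
    [Fintype κ] [DecidableEq κ] [Field K] [NeZero (2 : K)] (η : κ → K) (j : ℕ) :
    ∑ P : Matrix ι κ (ZMod 2) with hammingNorm (P.mulVec fun _ => 1) = j,
        ∏ a, bernoulliVectorWeight η (P a)
      = (Fintype.card ι).choose j * ((1 - ∏ b, (1 - 2 * η b)) / 2) ^ j *
          ((1 + ∏ b, (1 - 2 * η b)) / 2) ^ (Fintype.card ι - j) := by
  have binomial := sum_prod_with_card_filter_eq (ι := ι) (bernoulliVectorWeight η)
    (fun r => ∑ b, r b ≠ 0) j
  simp only [not_not, sum_even_bernoulliVectorWeight, sum_odd_bernoulliVectorWeight] at binomial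
  simp only [hammingNorm_mulVec_one]
  exact binomial

/-- for a random `l × i` matrix `P` over GF(2) with i.i.d. Bernoulli(η)
entries, the probability that the Hamming weight of `P · 1_i` (over GF(2)) equals `j` is
`C(l,j) ((1−(1−2η)^i)/2)^j ((1+(1−2η)^i)/2)^{l−j}`, for every `0 ≤ j ≤ l`. -/
theorem weight_of_bernoulli_matrix_mul_ones
    (l i j : ℕ) (η : ℝ) (hi : 1 ≤ i) (hη0 : 0 ≤ η) (hη1 : η ≤ 1) (hj : j ≤ l) :
    (∑ P : Matrix (Fin l) (Fin i) (ZMod 2),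
        if hammingNorm (P.mulVec fun _ => 1) = j then preProb η P else 0)
      = (l.choose j : ℝ) * ((1 - (1 - 2 * η) ^ i) / 2) ^ j *
          ((1 + (1 - 2 * η) ^ i) / 2) ^ (l - j) := by
  simpa [preProb, bernoulliVectorWeight, bernoulliWeight, sum_filter] using
    weight_of_bernoulli_matrix_mul_ones_general (ι := Fin l) (fun _ : Fin i => η) j
end
end
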